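/- Let m, n > 2 and let C be the set of all corner minors of M, so that I(C) = (x₁₁x_{ij} − x_{1j}x_{i1} : 2 ≤ i ≤ m, 2 ≤ j ≤ n) ⊆ S. Then the colon ideal (I(C) + x₁₁·I₂(M_{2,2}) + H² + V²) : x₁₁ equals H + V + I₂(M_{2,2}), where H and V are the ideals generated by the first-row and first-column variables, respectively. -/

import Mathlib

/-!
Write `x` for the pivot variable `x₁₁`, let `J` be any ideal and put `W = H + V + J`. The inclusion
`W ⊆ (I(C) + xJ + H² + V²) : x` holds because `xH ⊆ H²` and `xV ⊆ V²`. For the converse, consider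
the differential operator
`Φ = ∂₁₁ + ∑_{i, j ≥ 2} x_{ij} ∂_{1j} ∂_{i1} = ∂₁₁ + ∑_{j ≥ 2} ∂_{1j} F_j`,
where `F_j = ∑_{i ≥ 2} x_{ij} ∂_{i1}` is a derivation. The elements `h ∈ W` such that `Φ h` and all
`∂_{1j} h` and `F_j h` with `j ≥ 2` lie in `W` form an ideal `N`, since `Φ (g h) ≡ g Φ h` modulo `W`
once `h` and these first derivatives lie in `W`. As `Φ x = 1`, this congruence gives `N : x = W`.
Finally `N` contains `I(C)`, where the two terms of `Φ` cancel on each corner minor, as well as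
`xJ`, `H²` and `V²`.
-/

open MvPolynomial

/-- The Hilbert function `i ↦ dim_K (S/I)_i` of the quotient by a (homogeneous) ideal `I`,
for the standard grading by total degree. -/
noncomputable def hilbFun (K : Type*) [Field K] {m n : ℕ}
    (I : Ideal (MvPolynomial (Fin m × Fin n) K)) (i : ℕ) : ℕ :=
  Module.finrank K (homogeneousSubmodule (Fin m × Fin n) K i) -
    Module.finrank K
      (Submodule.restrictScalars K I ⊓ homogeneousSubmodule (Fin m × Fin n) K i :
        Submodule K (MvPolynomial (Fin m × Fin n) K))

/-- `P` is the Hilbert–Poincaré polynomial of `S/I`:  the Hilbert series of `S/I` equals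
`P(z)/(1-z)^d` where `d` is the Krull dimension of `S/I`. -/
noncomputable def IsHilbNum (K : Type*) [Field K] {m n : ℕ}
    (I : Ideal (MvPolynomial (Fin m × Fin n) K)) (P : Polynomial ℤ) : Prop :=
  ∃ d : ℕ, ringKrullDim (MvPolynomial (Fin m × Fin n) K ⧸ I) = (d : WithBot ℕ∞) ∧
    (PowerSeries.mk fun i => (hilbFun K I i : ℤ)) * (1 - PowerSeries.X) ^ d =
      PowerSeries.mk fun i => P.coeff i

/-- `I(C)` for `C` the set of all corner-interval minors:
`(x_{a,1}x_{b,k} − x_{b,1}x_{a,k} : 1 ≤ a < b ≤ m, 2 ≤ k ≤ n)` (here `0`-indexed). -/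
noncomputable def cornerIntervalIdealAll (K : Type*) [Field K] (m n : ℕ) [NeZero n] :
    Ideal (MvPolynomial (Fin m × Fin n) K) :=
  Ideal.span {f | ∃ (a b : Fin m) (k : Fin n), a < b ∧ k ≠ 0 ∧
    f = X (a, (0 : Fin n)) * X (b, k) - X (b, (0 : Fin n)) * X (a, k)}

/-- The determinantal ideal `I₂(M)` generated by all 2-minors of `M`. -/
noncomputable def detIdeal2 (K : Type*) [Field K] (m n : ℕ) :
    Ideal (MvPolynomial (Fin m × Fin n) K) :=
  Ideal.span {f | ∃ (a b : Fin m) (c d : Fin n), a < b ∧ c < d ∧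
    f = X (a, c) * X (b, d) - X (a, d) * X (b, c)}

/-- The ideal `I₂(M_{t+1,1})` generated by all 2-minors of the submatrix with
(0-indexed) rows `≥ t`, viewed inside the full polynomial ring `S`. -/
noncomputable def detIdeal2From (K : Type*) [Field K] (m n : ℕ) (t : ℕ) :
    Ideal (MvPolynomial (Fin m × Fin n) K) :=
  Ideal.span {f | ∃ (a b : Fin m) (c d : Fin n), a < b ∧ c < d ∧ t ≤ a.val ∧
    f = X (a, c) * X (b, d) - X (a, d) * X (b, c)}

/-- The ideal `I₂(M_{2,2})` generated by the 2-minors not involving the first row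
nor the first column, viewed inside the full polynomial ring `S`. -/
noncomputable def detIdeal2_22 (K : Type*) [Field K] (m n : ℕ) [NeZero m] [NeZero n] :
    Ideal (MvPolynomial (Fin m × Fin n) K) :=
  Ideal.span {f | ∃ (a b : Fin m) (c d : Fin n), a < b ∧ c < d ∧ a ≠ 0 ∧ c ≠ 0 ∧
    f = X (a, c) * X (b, d) - X (a, d) * X (b, c)}

/-- `I(C)` for `C` the set of all corner minors:
`(x₁₁x_{ij} − x_{1j}x_{i1} : 2 ≤ i ≤ m, 2 ≤ j ≤ n)` (here `0`-indexed). -/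
noncomputable def cornerIdealAll (K : Type*) [Field K] (m n : ℕ) [NeZero m] [NeZero n] :
    Ideal (MvPolynomial (Fin m × Fin n) K) :=
  Ideal.span {f | ∃ (i : Fin m) (j : Fin n), i ≠ 0 ∧ j ≠ 0 ∧
    f = X ((0 : Fin m), (0 : Fin n)) * X (i, j) - X ((0 : Fin m), j) * X (i, (0 : Fin n))}

/-- The ideal `H = (x₁₁, …, x_{1n})` generated by the variables of the first row. -/
noncomputable def rowIdeal (K : Type*) [Field K] (m n : ℕ) [NeZero m] :
    Ideal (MvPolynomial (Fin m × Fin n) K) :=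
  Ideal.span {f | ∃ j : Fin n, f = X ((0 : Fin m), j)}

/-- The ideal `V = (x₁₁, x₂₁, …, x_{m1})` generated by the variables of the first column. -/
noncomputable def colIdeal (K : Type*) [Field K] (m n : ℕ) [NeZero n] :
    Ideal (MvPolynomial (Fin m × Fin n) K) :=
  Ideal.span {f | ∃ i : Fin m, f = X (i, (0 : Fin n))}

section Colon

variable {S : Type*} [CommSemiring S]

lemma le_sq_colon_span_singleton {I : Ideal S} {x : S} (hx : x ∈ I) :
    I ≤ (I ^ 2).colon (Ideal.span {x}) := fun f hf => by
  rw [Ideal.mem_colon_span_singleton, pow_two]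
  exact Ideal.mul_mem_mul hf hx

lemma le_span_singleton_mul_colon (x : S) (J : Ideal S) :
    J ≤ (Ideal.span {x} * J).colon (Ideal.span {x}) := fun f hf => by
  rw [Ideal.mem_colon_span_singleton, mul_comm f x]
  exact Ideal.mul_mem_mul (Ideal.mem_span_singleton_self x) hf

end Colon

section SecondOrderOperators

variable {R S ι : Type*} [CommRing R] [CommRing S] [Algebra R S]

/-- The elements of the ideal `W` all of whose derivatives along the family `F` lie in `W`. -/
def firstOrderIdeal (F : ι → Derivation R S S) (W : Ideal S) : Ideal S where
  carrier := {a | a ∈ W ∧ ∀ j, F j a ∈ W}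
  zero_mem' := ⟨W.zero_mem, fun j => by simp only [map_zero, W.zero_mem]⟩
  add_mem' ha hb :=
    ⟨W.add_mem ha.1 hb.1, fun j => by simpa only [map_add] using W.add_mem (ha.2 j) (hb.2 j)⟩
  smul_mem' g a ha := by
    refine ⟨W.mul_mem_left g ha.1, fun j => ?_⟩
    rw [smul_eq_mul, Derivation.leibniz]
    exact W.add_mem (W.mul_mem_left _ (ha.2 j)) (W.mul_mem_right _ ha.1)

lemma mul_mem_firstOrderIdeal (F : ι → Derivation R S S) {W : Ideal S} {a b : S} (ha : a ∈ W)
    (hb : b ∈ W) : a * b ∈ firstOrderIdeal F W := by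
  refine ⟨W.mul_mem_left a hb, fun j => ?_⟩
  rw [Derivation.leibniz]
  exact W.add_mem (W.mul_mem_right _ ha) (W.mul_mem_right _ hb)

variable [Fintype ι]

/-- The second order differential operator `D + ∑ j, E j ∘ F j`. -/
def secondOrderOp (D : Derivation R S S) (E F : ι → Derivation R S S) : S →ₗ[R] S :=
  D + ∑ j, (E j : S →ₗ[R] S) ∘ₗ (F j : S →ₗ[R] S)

variable (D : Derivation R S S) (E F : ι → Derivation R S S) {W : Ideal S}

lemma secondOrderOp_apply (a : S) : secondOrderOp D E F a = D a + ∑ j, E j (F j a) := by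
  simp [secondOrderOp]

lemma secondOrderOp_mul (a b : S) :
    secondOrderOp D E F (a * b) = a * secondOrderOp D E F b + b * secondOrderOp D E F a +
      ∑ j, (E j a * F j b + F j a * E j b) := by
  have leibniz₂ (j : ι) : E j (F j (a * b)) =
      a * E j (F j b) + b * E j (F j a) + (E j a * F j b + F j a * E j b) := by
    simp only [Derivation.leibniz, map_add, smul_eq_mul]
    ring
  simp only [secondOrderOp_apply, leibniz₂]
  simp only [D.leibniz, smul_eq_mul, Finset.sum_add_distrib, mul_add, Finset.mul_sum]
  ring

lemma secondOrderOp_mul_sub_mem {h : S} (hE : h ∈ firstOrderIdeal E W)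
    (hF : h ∈ firstOrderIdeal F W) (g : S) :
    secondOrderOp D E F (g * h) - g * secondOrderOp D E F h ∈ W := by
  rw [secondOrderOp_mul, add_assoc, add_sub_cancel_left]
  exact W.add_mem (W.mul_mem_right _ hE.1) <| W.sum_mem fun j _ =>
    W.add_mem (W.mul_mem_left _ (hF.2 j)) (W.mul_mem_left _ (hE.2 j))

/-- The elements of `W` whose first derivatives along `E` and `F` and whose image under
`D + ∑ j, E j ∘ F j` all lie in `W`. -/
def secondOrderIdeal (W : Ideal S) : Ideal S where
  carrier := {a | a ∈ firstOrderIdeal E W ∧ a ∈ firstOrderIdeal F W ∧ secondOrderOp D E F a ∈ W}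
  zero_mem' := ⟨zero_mem _, zero_mem _, by simp only [map_zero, W.zero_mem]⟩
  add_mem' ha hb := ⟨add_mem ha.1 hb.1, add_mem ha.2.1 hb.2.1, by
    simpa only [map_add] using W.add_mem ha.2.2 hb.2.2⟩
  smul_mem' g a ha := by
    refine ⟨Ideal.mul_mem_left _ g ha.1, Ideal.mul_mem_left _ g ha.2.1, ?_⟩
    exact (W.sub_mem_iff_left (W.mul_mem_left g ha.2.2)).1
      (secondOrderOp_mul_sub_mem D E F ha.1 ha.2.1 g)

lemma secondOrderIdeal_colon {x : S} (hE : x ∈ firstOrderIdeal E W)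
    (hF : x ∈ firstOrderIdeal F W) (hx : secondOrderOp D E F x = 1) :
    (secondOrderIdeal D E F W).colon (Ideal.span {x}) = W := by
  ext f
  have congr_f : secondOrderOp D E F (f * x) - f ∈ W := by
    simpa only [hx, mul_one] using secondOrderOp_mul_sub_mem D E F hE hF f
  rw [Ideal.mem_colon_span_singleton]
  constructor
  · intro hfx
    exact (W.sub_mem_iff_right hfx.2.2).1 congr_f
  · intro hf
    exact ⟨Ideal.mul_mem_left _ f hE, Ideal.mul_mem_left _ f hF,
      (W.sub_mem_iff_left hf).1 congr_f⟩

lemma mul_mem_secondOrderIdeal {a b : S} (ha : a ∈ W) (hb : b ∈ W)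
    (hEF : ∀ j, E j a * F j b + F j a * E j b ∈ W) : a * b ∈ secondOrderIdeal D E F W := by
  refine ⟨mul_mem_firstOrderIdeal E ha hb, mul_mem_firstOrderIdeal F ha hb, ?_⟩
  rw [secondOrderOp_mul]
  exact W.add_mem (W.add_mem (W.mul_mem_right _ ha) (W.mul_mem_right _ hb))
    (W.sum_mem fun j _ => hEF j)

lemma sq_le_secondOrderIdeal_of_le_left {I : Ideal S} (hI : I ≤ firstOrderIdeal E W) :
    I ^ 2 ≤ secondOrderIdeal D E F W := by
  rw [pow_two, Ideal.mul_le]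
  intro a ha b hb
  exact mul_mem_secondOrderIdeal D E F (hI ha).1 (hI hb).1 fun j =>
    W.add_mem (W.mul_mem_right _ ((hI ha).2 j)) (W.mul_mem_left _ ((hI hb).2 j))

lemma sq_le_secondOrderIdeal_of_le_right {I : Ideal S} (hI : I ≤ firstOrderIdeal F W) :
    I ^ 2 ≤ secondOrderIdeal D E F W := by
  rw [pow_two, Ideal.mul_le]
  intro a ha b hb
  exact mul_mem_secondOrderIdeal D E F (hI ha).1 (hI hb).1 fun j =>
    W.add_mem (W.mul_mem_left _ ((hI hb).2 j)) (W.mul_mem_right _ ((hI ha).2 j))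

end SecondOrderOperators

section GenericMatrix

variable (R : Type*) [CommRing R] {σ τ : Type*} (i₀ : σ) (j₀ : τ)

/-- The ideal generated by the variables of row `i₀` of a generic `σ × τ` matrix. -/
noncomputable def rowVarsIdeal (τ : Type*) (i₀ : σ) : Ideal (MvPolynomial (σ × τ) R) :=
  Ideal.span {f | ∃ j : τ, f = X (i₀, j)}

/-- The ideal generated by the variables of column `j₀` of a generic `σ × τ` matrix. -/
noncomputable def colVarsIdeal (σ : Type*) (j₀ : τ) : Ideal (MvPolynomial (σ × τ) R) :=
  Ideal.span {f | ∃ i : σ, f = X (i, j₀)}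

/-- The ideal generated by the 2-minors, up to sign, of a generic `σ × τ` matrix that involve the
entry `(i₀, j₀)`; for `i₀ = j₀ = 0` these are the corner minors. -/
noncomputable def pivotMinorsIdeal : Ideal (MvPolynomial (σ × τ) R) :=
  Ideal.span {f | ∃ (i : σ) (j : τ), i ≠ i₀ ∧ j ≠ j₀ ∧
    f = X (i₀, j₀) * X (i, j) - X (i₀, j) * X (i, j₀)}

/-- The derivations `∂/∂x_{i₀ j}` for `j ≠ j₀`. -/
noncomputable def rowDerivation (j : {j : τ // j ≠ j₀}) :
    Derivation R (MvPolynomial (σ × τ) R) (MvPolynomial (σ × τ) R) :=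
  pderiv (i₀, j.1)

open Classical in
/-- The polarization operators `∑ i ≠ i₀, x_{i j} ∂/∂x_{i j₀}` for `j ≠ j₀`, given by their values
on the variables so that infinitely many rows are allowed. -/
noncomputable def polarization (j : {j : τ // j ≠ j₀}) :
    Derivation R (MvPolynomial (σ × τ) R) (MvPolynomial (σ × τ) R) :=
  mkDerivation R fun v => if v.1 ≠ i₀ ∧ v.2 = j₀ then X (v.1, j.1) else 0

variable {i₀ j₀}

lemma rowDerivation_X_col (i : σ) (j : {j : τ // j ≠ j₀}) :
    rowDerivation R i₀ j₀ j (X (i, j₀)) = 0 :=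
  pderiv_X_of_ne fun h => j.2 (Prod.ext_iff.1 h).2.symm

lemma polarization_X_row (j : {j : τ // j ≠ j₀}) (l : τ) :
    polarization R i₀ j₀ j (X (i₀, l)) = 0 := by
  simp [polarization, mkDerivation_X]

lemma polarization_X_of_ne_col (j : {j : τ // j ≠ j₀}) (i : σ) {l : τ} (hl : l ≠ j₀) :
    polarization R i₀ j₀ j (X (i, l)) = 0 := by
  simp [polarization, mkDerivation_X, hl]

lemma polarization_X_col (j : {j : τ // j ≠ j₀}) {i : σ} (hi : i ≠ i₀) :
    polarization R i₀ j₀ j (X (i, j₀)) = X (i, j.1) := by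
  simp [polarization, mkDerivation_X, hi]

variable {R} {W : Ideal (MvPolynomial (σ × τ) R)}

lemma X_mem_rowVarsIdeal (j : τ) : (X (i₀, j) : MvPolynomial (σ × τ) R) ∈ rowVarsIdeal R τ i₀ :=
  Ideal.subset_span ⟨j, rfl⟩

lemma X_mem_colVarsIdeal (i : σ) : (X (i, j₀) : MvPolynomial (σ × τ) R) ∈ colVarsIdeal R σ j₀ :=
  Ideal.subset_span ⟨i, rfl⟩

lemma rowVarsIdeal_le_firstOrderIdeal (hW : rowVarsIdeal R τ i₀ ≤ W) :
    rowVarsIdeal R τ i₀ ≤ firstOrderIdeal (polarization R i₀ j₀) W := by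
  refine Ideal.span_le.2 ?_
  rintro _ ⟨l, rfl⟩
  exact ⟨hW (X_mem_rowVarsIdeal l), fun j => polarization_X_row R j l ▸ W.zero_mem⟩

lemma colVarsIdeal_le_firstOrderIdeal (hW : colVarsIdeal R σ j₀ ≤ W) :
    colVarsIdeal R σ j₀ ≤ firstOrderIdeal (rowDerivation R i₀ j₀) W := by
  refine Ideal.span_le.2 ?_
  rintro _ ⟨i, rfl⟩
  exact ⟨hW (X_mem_colVarsIdeal i), fun j => rowDerivation_X_col R i j ▸ W.zero_mem⟩

variable (R i₀ j₀) [Fintype {j : τ // j ≠ j₀}]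

/-- The operator `∂/∂x_{i₀ j₀} + ∑ x_{i j} ∂/∂x_{i₀ j} ∂/∂x_{i j₀}`, summed over `i ≠ i₀` and
`j ≠ j₀`. -/
noncomputable def pivotOp : MvPolynomial (σ × τ) R →ₗ[R] MvPolynomial (σ × τ) R :=
  secondOrderOp (pderiv (i₀, j₀)) (rowDerivation R i₀ j₀) (polarization R i₀ j₀)

variable {i₀ j₀}

lemma pivotOp_X_pivot : pivotOp R i₀ j₀ (X (i₀, j₀)) = 1 := by
  simp [pivotOp, secondOrderOp_apply, polarization_X_row]

lemma pivotOp_minor {i : σ} {j : τ} (hi : i ≠ i₀) (hj : j ≠ j₀) :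
    pivotOp R i₀ j₀ (X (i₀, j₀) * X (i, j) - X (i₀, j) * X (i, j₀)) = 0 := by
  classical
  have pderiv_minor : pderiv (i₀, j₀)
      (X (i₀, j₀) * X (i, j) - X (i₀, j) * X (i, j₀) : MvPolynomial (σ × τ) R) = X (i, j) := by
    simp [pderiv_X, hi, hj]
  have polarization_minor (l : {l : τ // l ≠ j₀}) : polarization R i₀ j₀ l
      (X (i₀, j₀) * X (i, j) - X (i₀, j) * X (i, j₀)) = -(X (i₀, j) * X (i, l.1)) := by
    simp [polarization_X_row, polarization_X_of_ne_col R l i hj, polarization_X_col R l hi]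
  have rowDerivation_term (l : {l : τ // l ≠ j₀}) :
      rowDerivation R i₀ j₀ l (X (i₀, j) * X (i, l.1)) =
        if l = ⟨j, hj⟩ then X (i, j) else 0 := by
    rcases l with ⟨l, hl⟩
    by_cases hlj : l = j
    · subst hlj
      simp [rowDerivation, pderiv_X, hi]
    · simp [rowDerivation, pderiv_X, hi, hlj, Ne.symm hlj]
  simp only [pivotOp, secondOrderOp_apply, pderiv_minor, polarization_minor, map_neg,
    rowDerivation_term, Finset.sum_neg_distrib, Finset.sum_ite_eq', Finset.mem_univ, if_true,
    add_neg_cancel]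

variable {R} (i₀ j₀)

/-- The ideal of polynomials on which `pivotOp`, the derivations `rowDerivation` and
`polarization`, and the identity all take values in `W`. -/
noncomputable def pivotIdeal (W : Ideal (MvPolynomial (σ × τ) R)) :
    Ideal (MvPolynomial (σ × τ) R) :=
  secondOrderIdeal (pderiv (i₀, j₀)) (rowDerivation R i₀ j₀) (polarization R i₀ j₀) W

variable {i₀ j₀}

lemma pivotIdeal_colon (hH : rowVarsIdeal R τ i₀ ≤ W) (hV : colVarsIdeal R σ j₀ ≤ W) :
    (pivotIdeal i₀ j₀ W).colon (Ideal.span {(X (i₀, j₀) : MvPolynomial (σ × τ) R)}) = W :=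
  secondOrderIdeal_colon _ _ _
    (colVarsIdeal_le_firstOrderIdeal hV (X_mem_colVarsIdeal i₀))
    (rowVarsIdeal_le_firstOrderIdeal hH (X_mem_rowVarsIdeal j₀)) (pivotOp_X_pivot R)

lemma pivotMinorsIdeal_le_pivotIdeal (hH : rowVarsIdeal R τ i₀ ≤ W)
    (hV : colVarsIdeal R σ j₀ ≤ W) : pivotMinorsIdeal R i₀ j₀ ≤ pivotIdeal i₀ j₀ W := by
  refine Ideal.span_le.2 ?_
  rintro _ ⟨i, j, hi, hj, rfl⟩
  have hcol (k : σ) := colVarsIdeal_le_firstOrderIdeal (i₀ := i₀) hV (X_mem_colVarsIdeal k)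
  have hrow (l : τ) := rowVarsIdeal_le_firstOrderIdeal (j₀ := j₀) hH (X_mem_rowVarsIdeal l)
  refine ⟨?_, ?_, ?_⟩
  · exact sub_mem (Ideal.mul_mem_right _ _ (hcol i₀)) (Ideal.mul_mem_left _ _ (hcol i))
  · exact sub_mem (Ideal.mul_mem_right _ _ (hrow j₀)) (Ideal.mul_mem_right _ _ (hrow j))
  · exact (pivotOp_minor R hi hj).symm ▸ W.zero_mem

lemma span_X_pivot_mul_le_pivotIdeal (hH : rowVarsIdeal R τ i₀ ≤ W)
    (hV : colVarsIdeal R σ j₀ ≤ W) : Ideal.span {X (i₀, j₀)} * W ≤ pivotIdeal i₀ j₀ W := by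
  refine Ideal.span_singleton_mul_le_iff.2 fun z hz => ?_
  rw [mul_comm, ← Ideal.mem_colon_span_singleton, pivotIdeal_colon hH hV]
  exact hz

end GenericMatrix

theorem statement19_general (R : Type*) [CommRing R] {σ τ : Type*} [Finite τ] (i₀ : σ) (j₀ : τ)
    (J : Ideal (MvPolynomial (σ × τ) R)) :
    (pivotMinorsIdeal R i₀ j₀ + Ideal.span {(X (i₀, j₀) : MvPolynomial (σ × τ) R)} * J +
        rowVarsIdeal R τ i₀ ^ 2 + colVarsIdeal R σ j₀ ^ 2).colon
      (Ideal.span {(X (i₀, j₀) : MvPolynomial (σ × τ) R)}) =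
      rowVarsIdeal R τ i₀ + colVarsIdeal R σ j₀ + J := by
  have := Fintype.ofFinite {j : τ // j ≠ j₀}
  set W := rowVarsIdeal R τ i₀ + colVarsIdeal R σ j₀ + J
  have hH : rowVarsIdeal R τ i₀ ≤ W := le_sup_left.trans le_sup_left
  have hV : colVarsIdeal R σ j₀ ≤ W := le_sup_right.trans le_sup_left
  have hJ : J ≤ W := le_sup_right
  apply le_antisymm
  · refine (Submodule.colon_mono ?_ le_rfl).trans (pivotIdeal_colon hH hV).le
    refine sup_le (sup_le (sup_le (pivotMinorsIdeal_le_pivotIdeal hH hV) ?_) ?_) ?_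
    · exact (Ideal.mul_mono_right hJ).trans (span_X_pivot_mul_le_pivotIdeal hH hV)
    · exact sq_le_secondOrderIdeal_of_le_right _ _ _ (rowVarsIdeal_le_firstOrderIdeal hH)
    · exact sq_le_secondOrderIdeal_of_le_left _ _ _ (colVarsIdeal_le_firstOrderIdeal hV)
  · refine sup_le (sup_le ?_ ?_) ?_
    · exact (le_sq_colon_span_singleton (X_mem_rowVarsIdeal j₀)).trans
        (Submodule.colon_mono (le_sup_right.trans le_sup_left) le_rfl)
    · exact (le_sq_colon_span_singleton (X_mem_colVarsIdeal i₀)).trans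
        (Submodule.colon_mono le_sup_right le_rfl)
    · exact (le_span_singleton_mul_colon _ J).trans
        (Submodule.colon_mono (le_sup_right.trans (le_sup_left.trans le_sup_left)) le_rfl)

theorem statement19 (K : Type*) [Field K] (m n : ℕ) [NeZero m] [NeZero n]
    (hm : 2 < m) (hn : 2 < n) :
    (cornerIdealAll K m n +
        Ideal.span {(X ((0 : Fin m), (0 : Fin n)) : MvPolynomial (Fin m × Fin n) K)} *
          detIdeal2_22 K m n +
        rowIdeal K m n ^ 2 + colIdeal K m n ^ 2).colon
      (Ideal.span {(X ((0 : Fin m), (0 : Fin n)) : MvPolynomial (Fin m × Fin n) K)}) =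
      rowIdeal K m n + colIdeal K m n + detIdeal2_22 K m n :=
  statement19_general K (0 : Fin m) (0 : Fin n) (detIdeal2_22 K m n)
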